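/- Let (Σ, 𝓢, ν) be a standard Borel probability space and S : Σ → Σ an invertible bimeasurable ν-preserving transformation which is aperiodic, i.e. for every integer n ≠ 0, ν({ω ∈ Σ : S^n ω = ω}) = 0. Then for every ε > 0, every N ∈ ℕ and every x ∈ (0,1) there exists a measurable set A ∈ 𝓢 with ν(A) = x and ν(A Δ S^{-n}A) < ε·ν(A) for every integer 0 ≤ n ≤ N. -/

import Mathlib

open MeasureTheory Set

/-- The `k`-th iterate (for `k : ℤ`) of an invertible transformation. -/
noncomputable def iterZ {α : Type*} [MeasurableSpace α] (S : α ≃ᵐ α) : ℤ → α → α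
  | Int.ofNat n => (⇑S)^[n]
  | Int.negSucc n => (⇑S.symm)^[n + 1]

open Filter Topology in
/-- A probability measure without point masses on a standard Borel space takes every value in
`(0, 1)`. -/
theorem exists_measurableSet_measure_eq_ofReal {β : Type*} [MeasurableSpace β]
    [StandardBorelSpace β] (μ : Measure β) [IsProbabilityMeasure μ] (hμ : ∀ y, μ {y} = 0)
    {x : ℝ} (hx : x ∈ Ioo (0 : ℝ) 1) :
    ∃ C : Set β, MeasurableSet C ∧ μ C = ENNReal.ofReal x := by
  have he := measurableEmbedding_embeddingReal β
  let m : Measure ℝ := μ.map (embeddingReal β)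
  have : IsProbabilityMeasure m := Measure.isProbabilityMeasure_map he.measurable.aemeasurable
  have hm (a : ℝ) : m {a} = 0 := by
    rw [he.map_apply]
    exact (subsingleton_singleton.preimage he.injective).induction_on (p := (μ · = 0))
      measure_empty hμ
  have hcont : Continuous (ProbabilityTheory.cdf m) := by
    refine continuous_iff_continuousAt.2 fun a => ?_
    have hmono := ProbabilityTheory.monotone_cdf m
    rw [hmono.continuousAt_iff_leftLim_eq_rightLim, StieltjesFunction.rightLim_eq]
    refine le_antisymm (hmono.leftLim_le le_rfl) ?_
    have h := (ProbabilityTheory.cdf m).measure_singleton a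
    rw [ProbabilityTheory.measure_cdf, hm] at h
    simpa using ENNReal.ofReal_eq_zero.1 h.symm
  obtain ⟨a, ha⟩ : x ∈ range (ProbabilityTheory.cdf m) :=
    mem_range_of_exists_le_of_exists_ge hcont
      (((ProbabilityTheory.tendsto_cdf_atBot m).eventually_le_const hx.1).exists)
      (((ProbabilityTheory.tendsto_cdf_atTop m).eventually_const_le hx.2).exists)
  refine ⟨embeddingReal β ⁻¹' Iic a, he.measurable measurableSet_Iic, ?_⟩
  rw [← he.map_apply, ← ProbabilityTheory.ofReal_cdf, ha]

/-- Given countably many sets, each disjoint from its first `n` preimages under `S`, there is a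
single set with this property which the orbit segment of length `2 * n` centred at any point of
their union meets. -/
theorem exists_marker {α : Type*} [MeasurableSpace α] (S : α ≃ᵐ α) (n : ℕ) (E : ℕ → Set α)
    (hE : ∀ i, MeasurableSet (E i))
    (hret : ∀ i, ∀ ω ∈ E i, ∀ j, 1 ≤ j → j ≤ n → (⇑S)^[j] ω ∉ E i) :
    ∃ B : Set α, MeasurableSet B ∧ (∀ ω ∈ B, ∀ j, 1 ≤ j → j ≤ n → (⇑S)^[j] ω ∉ B) ∧
      ∀ i, ∀ ω, (⇑S)^[n] ω ∈ E i → ∃ k, (⇑S)^[k] ω ∈ B := by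
  have hSS (k : ℕ) : Function.LeftInverse ((⇑S.symm)^[k]) ((⇑S)^[k]) :=
    Function.LeftInverse.iterate S.symm_apply_apply k
  let near (B : Set α) : Set α := {ω | ∃ k ≤ 2 * n, (⇑S)^[k] ((⇑S.symm)^[n] ω) ∈ B}
  have hnear_meas (B : Set α) (hB : MeasurableSet B) : MeasurableSet (near B) := by
    have : near B = ⋃ k ∈ Iic (2 * n), (fun ω => (⇑S)^[k] ((⇑S.symm)^[n] ω)) ⁻¹' B := by
      ext ω; simp [near]
    rw [this]
    exact MeasurableSet.biUnion (to_countable _) fun k _ =>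
      ((S.measurable.iterate k).comp (S.symm.measurable.iterate n)) hB
  let F : ℕ → Set α := Nat.rec (motive := fun _ => Set α) ∅ fun i B => B ∪ (E i \ near B)
  have hF (i : ℕ) : F (i + 1) = F i ∪ (E i \ near (F i)) := rfl
  have hmono : Monotone F := monotone_nat_of_le_succ fun i => by
    rw [hF]; exact subset_union_left
  have hF_meas (i : ℕ) : MeasurableSet (F i) := by
    induction i with
    | zero => exact MeasurableSet.empty
    | succ i ih => rw [hF]; exact ih.union ((hE i).diff (hnear_meas _ ih))
  have hF_ret (i : ℕ) : ∀ ω ∈ F i, ∀ j, 1 ≤ j → j ≤ n → (⇑S)^[j] ω ∉ F i := by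
    induction i with
    | zero => intro ω hω; exact hω.elim
    | succ i ih =>
      intro ω hω j hj hjn hω'
      rw [hF] at hω hω'
      rcases hω with hω | ⟨hω, hfar⟩ <;> rcases hω' with hω' | ⟨hω', hfar'⟩
      · exact ih ω hω j hj hjn hω'
      · refine hfar' ⟨n - j, by omega, ?_⟩
        obtain ⟨d, rfl⟩ := Nat.exists_eq_add_of_le' hjn
        rw [Function.iterate_add_apply, hSS, Nat.add_sub_cancel,
          Function.LeftInverse.iterate S.apply_symm_apply d]
        exact hω
      · refine hfar ⟨j + n, by omega, ?_⟩
        rw [Function.iterate_add_apply, Function.LeftInverse.iterate S.apply_symm_apply n]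
        exact hω'
      · exact hret i ω hω j hj hjn hω'
  refine ⟨⋃ i, F i, MeasurableSet.iUnion hF_meas, ?_, ?_⟩
  · intro ω hω j hj hjn hω'
    obtain ⟨a, ha⟩ := mem_iUnion.1 hω
    obtain ⟨b, hb⟩ := mem_iUnion.1 hω'
    exact hF_ret (max a b) ω (hmono (le_max_left a b) ha) j hj hjn (hmono (le_max_right a b) hb)
  · intro i ω hω
    rcases em ((⇑S)^[n] ω ∈ near (F i)) with ⟨k, -, hk⟩ | h
    · rw [hSS] at hk
      exact ⟨k, mem_iUnion.2 ⟨i, hk⟩⟩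
    · exact ⟨n, mem_iUnion.2 ⟨i + 1, Or.inr ⟨hω, h⟩⟩⟩

/-- In a standard Borel space, the points at which `S` has no period in `[1, n]` are covered by
countably many measurable sets disjoint from their first `n` preimages. -/
theorem exists_cover_of_no_small_period {α : Type*} [MeasurableSpace α] [StandardBorelSpace α]
    {f : α → α} (hf : Measurable f) (n : ℕ) :
    ∃ E : ℕ → Set α, (∀ i, MeasurableSet (E i)) ∧
      (∀ i, ∀ ω ∈ E i, ∀ j, 1 ≤ j → j ≤ n → f^[j] ω ∉ E i) ∧
      ∀ ω, (∀ j, 1 ≤ j → j ≤ n → f^[j] ω ≠ ω) → ∃ i, ω ∈ E i := by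
  let := upgradeStandardBorel α
  obtain ⟨U, hU⟩ := ((TopologicalSpace.countable_countableBasis α).insert ∅).exists_eq_range
    (insert_nonempty _ _)
  have hbasis := (TopologicalSpace.isBasis_countableBasis α).insert_empty
  have hU_meas (i : ℕ) : MeasurableSet (U i) :=
    (hbasis.isOpen (hU ▸ mem_range_self i)).measurableSet
  refine ⟨fun i => U i \ ⋃ j ∈ Icc 1 n, f^[j] ⁻¹' U i, fun i => ?_, ?_, ?_⟩
  · exact (hU_meas i).diff (MeasurableSet.biUnion (to_countable _) fun j _ =>
      (hf.iterate j) (hU_meas i))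
  · intro i ω hω j hj hjn hω'
    exact hω.2 (mem_biUnion (show j ∈ Icc 1 n from ⟨hj, hjn⟩) hω'.1)
  · intro ω hω
    have hfin : ((fun j => f^[j] ω) '' Icc 1 n).Finite := (finite_Icc 1 n).image _
    obtain ⟨V, hV, hωV, hVsub⟩ := hbasis.exists_subset_of_mem_open (a := ω)
      (u := ((fun j => f^[j] ω) '' Icc 1 n)ᶜ)
      (by rintro ⟨j, hj, h⟩; exact hω j hj.1 hj.2 h) hfin.isClosed.isOpen_compl
    rw [hU] at hV
    obtain ⟨i, rfl⟩ := hV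
    refine ⟨i, hωV, fun h => ?_⟩
    obtain ⟨j, hj, h⟩ := mem_iUnion₂.1 h
    exact hVsub h ⟨j, hj, rfl⟩

/-- A measurable set disjoint from its first `n` preimages has measure at most `1 / (n + 1)`. -/
theorem succ_mul_measure_le_one {α : Type*} [MeasurableSpace α] {ν : Measure α}
    [IsProbabilityMeasure ν] {f : α → α} (hf : MeasurePreserving f ν ν) {n : ℕ} {B : Set α}
    (hB : MeasurableSet B) (hret : ∀ ω ∈ B, ∀ j, 1 ≤ j → j ≤ n → f^[j] ω ∉ B) :
    ((n + 1 : ℕ) : ENNReal) * ν B ≤ 1 := by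
  have key (a b : ℕ) (hab : a < b) (hb : b ≤ n) : Disjoint (f^[a] ⁻¹' B) (f^[b] ⁻¹' B) := by
    refine Set.disjoint_left.2 fun ω ha hb' => ?_
    refine hret _ ha (b - a) (by omega) (by omega) ?_
    rw [← Function.iterate_add_apply, Nat.sub_add_cancel hab.le]
    exact hb'
  have hdisj : ((Finset.range (n + 1) : Finset ℕ) : Set ℕ).PairwiseDisjoint
      fun j => f^[j] ⁻¹' B := by
    intro a ha b hb hab
    have ha' := Finset.mem_range.1 (Finset.mem_coe.1 ha)
    have hb' := Finset.mem_range.1 (Finset.mem_coe.1 hb)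
    rcases lt_or_gt_of_ne hab with h | h
    · exact key a b h (by omega)
    · exact (key b a h (by omega)).symm
  have h := measure_biUnion_finset (μ := ν) hdisj
    fun j _ => (hf.measurable.iterate j) hB
  rw [Finset.sum_congr rfl fun j _ => (hf.iterate j).measure_preimage hB.nullMeasurableSet] at h
  rw [Finset.sum_const, Finset.card_range, nsmul_eq_mul] at h
  exact h ▸ prob_le_one

/-- An aperiodic transformation has sets of arbitrarily small measure met by every forward
orbit. -/
theorem exists_small_sweeping_set {α : Type*} [MeasurableSpace α] [StandardBorelSpace α]
    {ν : Measure α} [IsProbabilityMeasure ν] (S : α ≃ᵐ α) (hS : MeasurePreserving S ν ν)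
    (haper : ∀ k : ℕ, k ≠ 0 → ν {ω | (⇑S)^[k] ω = ω} = 0) {δ : ENNReal} (hδ : δ ≠ 0) :
    ∃ B : Set α, MeasurableSet B ∧ ν B < δ ∧ ∀ ω, ∃ k, (⇑S)^[k] ω ∈ B := by
  obtain ⟨n, hn⟩ := ENNReal.exists_inv_nat_lt hδ
  obtain ⟨E, hE, hret, hcover⟩ := exists_cover_of_no_small_period S.measurable n
  obtain ⟨B, hB, hBret, hBhit⟩ := exists_marker S n E hE hret
  let Z : Set α := ⋃ j ∈ Icc 1 n, {ω | (⇑S)^[j] ω = ω}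
  have hZ : ν Z = 0 := (measure_biUnion_null_iff (to_countable _)).2 fun j hj =>
    haper j (Nat.one_le_iff_ne_zero.1 hj.1)
  have hZ_meas : MeasurableSet Z := MeasurableSet.biUnion (to_countable _) fun j _ =>
    measurableSet_eq_fun (S.measurable.iterate j) measurable_id
  refine ⟨B ∪ Z, hB.union hZ_meas, ?_, fun ω => ?_⟩
  · refine (measure_union_le B Z).trans_lt ?_
    rw [hZ, add_zero]
    refine lt_of_le_of_lt ?_ hn
    rw [ENNReal.le_inv_iff_mul_le, mul_comm]
    refine le_trans ?_ (succ_mul_measure_le_one hS hB hBret)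
    gcongr
    omega
  · by_cases hω : ω ∈ Z
    · exact ⟨0, Or.inr hω⟩
    · obtain ⟨i, hi⟩ := hcover ((⇑S)^[n] ω) fun j hj hjn h => hω <|
        mem_biUnion (show j ∈ Icc 1 n from ⟨hj, hjn⟩) <| by
          rw [← Function.iterate_add_apply, add_comm, Function.iterate_add_apply] at h
          exact S.injective.iterate n h
      obtain ⟨k, hk⟩ := hBhit i ω hi
      exact ⟨k, Or.inl hk⟩

/-- An aperiodic transformation preserving a finite measure leaves no room for point masses. -/
theorem measure_singleton_eq_zero_of_aperiodic {α : Type*} [MeasurableSpace α]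
    [MeasurableSingletonClass α] {ν : Measure α} [IsFiniteMeasure ν] {f : α → α}
    (hf : MeasurePreserving f ν ν) (haper : ∀ k : ℕ, k ≠ 0 → ν {ω | f^[k] ω = ω} = 0) (y : α) :
    ν {y} = 0 := by
  by_contra hy
  obtain ⟨z, hz, m, hm, hret⟩ :=
    hf.conservative.exists_mem_iterate_mem (measurableSet_singleton y).nullMeasurableSet hy
  obtain rfl : z = y := hz
  exact hy (measure_mono_null (t := {ω | f^[m] ω = ω}) (singleton_subset_iff.2 hret) (haper m hm))

theorem measure_symmDiff_preimage_iterate_le {α : Type*} [MeasurableSpace α] {ν : Measure α}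
    {f : α → α} (hf : MeasurePreserving f ν ν) {A : Set α} (hA : MeasurableSet A) (n : ℕ) :
    ν (symmDiff A (f^[n] ⁻¹' A)) ≤ n * ν (symmDiff A (f ⁻¹' A)) := by
  induction n with
  | zero => simp
  | succ n ih =>
    have hstep : ν (symmDiff (f^[n] ⁻¹' A) (f^[n + 1] ⁻¹' A)) = ν (symmDiff A (f ⁻¹' A)) := by
      rw [← (hf.iterate n).measure_preimage
        (hA.symmDiff (hf.measurable hA)).nullMeasurableSet, Function.iterate_succ']
      rfl
    calc ν (symmDiff A (f^[n + 1] ⁻¹' A))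
        ≤ ν (symmDiff A (f^[n] ⁻¹' A)) + ν (symmDiff (f^[n] ⁻¹' A) (f^[n + 1] ⁻¹' A)) :=
          measure_symmDiff_le _ _ _
      _ ≤ n * ν (symmDiff A (f ⁻¹' A)) + ν (symmDiff A (f ⁻¹' A)) := by
          rw [hstep]; gcongr
      _ = (n + 1 : ℕ) * ν (symmDiff A (f ⁻¹' A)) := by push_cast; ring

/-- If every forward orbit meets `B`, some set of measure `x` is invariant up to a subset
of `B`: the preimage of a suitable set under the first-hit map to `B`. -/
theorem exists_measure_eq_symmDiff_subset {α : Type*} [MeasurableSpace α] [StandardBorelSpace α]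
    {ν : Measure α} [IsProbabilityMeasure ν] {f : α → α} (hf : MeasurePreserving f ν ν)
    (hν : ∀ y, ν {y} = 0) {B : Set α} (hB : MeasurableSet B) (hhit : ∀ ω, ∃ k, f^[k] ω ∈ B)
    {x : ℝ} (hx : x ∈ Ioo (0 : ℝ) 1) :
    ∃ A : Set α, MeasurableSet A ∧ ν A = ENNReal.ofReal x ∧ symmDiff A (f ⁻¹' A) ⊆ B := by
  classical
  let g : α → α := fun ω => f^[Nat.find (hhit ω)] ω
  have hg : Measurable g := Measurable.find (f := fun k => f^[k]) (p := fun k ω => f^[k] ω ∈ B)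
    (fun k => hf.measurable.iterate k) (fun k => (hf.measurable.iterate k) hB) hhit
  have hgf (ω : α) (hω : ω ∉ B) : g (f ω) = g ω := by
    have h : Nat.find (hhit ω) = Nat.find (hhit (f ω)) + 1 :=
      Nat.find_comp_succ (hhit ω) (hhit (f ω)) hω
    simp only [g]
    rw [h, Function.iterate_succ_apply]
  have : IsProbabilityMeasure (ν.map g) := Measure.isProbabilityMeasure_map hg.aemeasurable
  have hmap (y : α) : ν.map g {y} = 0 := by
    rw [Measure.map_apply hg (measurableSet_singleton y)]
    refine measure_mono_null (t := ⋃ k, f^[k] ⁻¹' {y}) (fun ω hω => mem_iUnion.2 ⟨_, hω⟩) ?_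
    refine measure_iUnion_null fun k => ?_
    rw [(hf.iterate k).measure_preimage (measurableSet_singleton y).nullMeasurableSet, hν]
  obtain ⟨C, hC, hCx⟩ := exists_measurableSet_measure_eq_ofReal (ν.map g) hmap hx
  rw [Measure.map_apply hg hC] at hCx
  refine ⟨g ⁻¹' C, hg hC, hCx, fun ω hω => ?_⟩
  by_contra hωB
  simp [mem_symmDiff, hgf ω hωB] at hω

/-- (del Junco–Rosenblatt) If `S` is an aperiodic invertible measure-preserving
transformation of a standard Borel probability space, then for every `ε > 0`, `N ∈ ℕ` and
`x ∈ (0,1)` there is a measurable set `A` with `ν(A) = x` and `ν(A Δ S^{-n}A) < ε·ν(A)`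
for all `0 ≤ n ≤ N`. -/
theorem stmt4 {α : Type*} [MeasurableSpace α] [StandardBorelSpace α]
    (ν : Measure α) [IsProbabilityMeasure ν]
    (S : α ≃ᵐ α) (hS : MeasurePreserving S ν ν)
    (haper : ∀ k : ℤ, k ≠ 0 → ν {ω | iterZ S k ω = ω} = 0) :
    ∀ ε : ℝ, 0 < ε → ∀ N : ℕ, ∀ x : ℝ, x ∈ Set.Ioo (0 : ℝ) 1 →
      ∃ A : Set α, MeasurableSet A ∧ ν A = ENNReal.ofReal x ∧
        ∀ n : ℕ, n ≤ N → ν (symmDiff A ((⇑S)^[n] ⁻¹' A)) < ENNReal.ofReal ε * ν A := by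
  intro ε hε N x hx
  have hpos (k : ℕ) (hk : k ≠ 0) : ν {ω | (⇑S)^[k] ω = ω} = 0 :=
    haper k (Int.natCast_ne_zero.2 hk)
  have hεx : ENNReal.ofReal ε * ENNReal.ofReal x ≠ 0 :=
    mul_ne_zero (ENNReal.ofReal_pos.2 hε).ne' (ENNReal.ofReal_pos.2 hx.1).ne'
  have hN : ((N + 1 : ℕ) : ENNReal) ≠ 0 := by simp
  have hN' : ((N + 1 : ℕ) : ENNReal) ≠ ⊤ := ENNReal.natCast_ne_top _
  obtain ⟨B, hB, hBδ, hhit⟩ := exists_small_sweeping_set S hS hpos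
    (ENNReal.div_ne_zero.2 ⟨hεx, hN'⟩)
  obtain ⟨A, hA, hAx, hAB⟩ := exists_measure_eq_symmDiff_subset hS
    (measure_singleton_eq_zero_of_aperiodic hS hpos) hB hhit hx
  refine ⟨A, hA, hAx, fun n hn => ?_⟩
  rw [hAx]
  calc ν (symmDiff A ((⇑S)^[n] ⁻¹' A))
      ≤ n * ν (symmDiff A (S ⁻¹' A)) := measure_symmDiff_preimage_iterate_le hS hA n
    _ ≤ (N + 1 : ℕ) * ν B := by
        gcongr
        omega
    _ < ENNReal.ofReal ε * ENNReal.ofReal x := by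
        rw [mul_comm]
        exact (ENNReal.lt_div_iff_mul_lt (Or.inl hN) (Or.inl hN')).1 hBδ
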